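/- Let n ≥ 1 be an integer. Then C(n,∞) = 2^{2n−1}·n!; that is, every f ∈ 𝒟ⁿ([0,1]) satisfies m_n(f) ≤ 2^{2n−1}·n! · sup_{t∈[0,1]} |f(t)|, and 2^{2n−1}·n! is the smallest constant with this property. -/

import Mathlib

open Set Polynomial Nat MeasureTheory ENNReal

/-- `fd 0` belongs to `𝒟ⁿ([a,b])`, with `fd k` its `k`-th derivative: `fd k` exists and is
continuous on `[a,b]` for `0 ≤ k ≤ n-1`, and `fd n` is the derivative of `fd (n-1)` on `(a,b)`. -/
def IsDn (n : ℕ) (a b : ℝ) (fd : ℕ → ℝ → ℝ) : Prop :=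
  (∀ k, k + 1 < n → ∀ x ∈ Set.Icc a b, HasDerivWithinAt (fd k) (fd (k + 1) x) (Set.Icc a b) x) ∧
  ContinuousOn (fd (n - 1)) (Set.Icc a b) ∧
  (∀ x ∈ Set.Ioo a b, HasDerivAt (fd (n - 1)) (fd n x) x)

/-- `m_n(f) = inf_{a<t<b} |f^{(n)}(t)|`. -/
noncomputable def mIoo (n : ℕ) (a b : ℝ) (fd : ℕ → ℝ → ℝ) : ℝ :=
  sInf ((fun t => |fd n t|) '' Set.Ioo a b)

/-- `‖f‖_{p,[a,b]}` for `0 < p < ∞`. -/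
noncomputable def Lp (p a b : ℝ) (f : ℝ → ℝ) : ℝ :=
  (∫ t in a..b, |f t| ^ p) ^ (1 / p)

/-- `‖f‖_{∞,[a,b]}`. -/
noncomputable def Lsup (a b : ℝ) (f : ℝ → ℝ) : ℝ :=
  sSup ((fun t => |f t|) '' Set.Icc a b)

/-- `‖f‖_{p,[a,b]}` for `0 < p ≤ ∞`. -/
noncomputable def pnorm (p : ℝ≥0∞) (a b : ℝ) (f : ℝ → ℝ) : ℝ :=
  if p = ⊤ then Lsup a b f else Lp p.toReal a b f

/-- `D**(n,p,[a,b])`, `p` finite. -/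
noncomputable def Dstar (n : ℕ) (p a b : ℝ) : ℝ :=
  sInf { c | ∃ Q : Polynomial ℝ, Q.Monic ∧ Q.natDegree = n ∧ c = Lp p a b (fun x => Q.eval x) }

/-- `D**(n,∞,[a,b])`. -/
noncomputable def DstarInf (n : ℕ) (a b : ℝ) : ℝ :=
  sInf { c | ∃ Q : Polynomial ℝ, Q.Monic ∧ Q.natDegree = n ∧ c = Lsup a b (fun x => Q.eval x) }

/-- `C(n,p)`, `p` finite. -/
noncomputable def Cnp (n : ℕ) (p : ℝ) : ℝ :=
  sSup { c | ∃ fd : ℕ → ℝ → ℝ, IsDn n 0 1 fd ∧ (∃ x ∈ Set.Icc (0:ℝ) 1, fd 0 x ≠ 0) ∧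
    c = mIoo n 0 1 fd / Lp p 0 1 (fd 0) }

/-- `C(n,∞)`. -/
noncomputable def CnpInf (n : ℕ) : ℝ :=
  sSup { c | ∃ fd : ℕ → ℝ → ℝ, IsDn n 0 1 fd ∧ (∃ x ∈ Set.Icc (0:ℝ) 1, fd 0 x ≠ 0) ∧
    c = mIoo n 0 1 fd / Lsup 0 1 (fd 0) }

/-!
If a polynomial `P` of degree at most `n` agrees with `f` at `n + 1` points, then `f - P` has
`n + 1` zeros, so by iterated Rolle `f⁽ⁿ⁾(c)` is, for some `c`, equal to `n!` times the `n`-th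
coefficient of `P`, which is the divided difference of `f` at these points. The divided difference
is a combination of values of `f`, hence at most `sup |f|` times the sum of the absolute values of
the nodal weights. At the Chebyshev extremal points these weights alternate in sign exactly as the
values of the Chebyshev polynomial do, so this sum is the divided difference, i.e. the leading
coefficient, of that polynomial; its `n`-th derivative is constant, which makes it extremal.
-/

section Rolle

theorem exists_finset_hasDerivAt_eq_zero {f f' : ℝ → ℝ} {a b : ℝ} {m : ℕ}
    (hf : ContinuousOn f (Icc a b)) (hff' : ∀ x ∈ Ioo a b, HasDerivAt f (f' x) x)
    {s : Finset ℝ} (hs : s.card = m + 1) (hsab : ∀ x ∈ s, x ∈ Icc a b) (hfs : ∀ x ∈ s, f x = 0) :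
    ∃ t : Finset ℝ, t.card = m ∧ ∀ y ∈ t, y ∈ Ioo a b ∧ f' y = 0 := by
  let x := s.orderEmbOfFin hs
  have hx (i) : x i ∈ s := s.orderEmbOfFin_mem hs i
  have rolle (i : Fin m) : ∃ y ∈ Ioo (x i.castSucc) (x i.succ), f' y = 0 :=
    exists_hasDerivAt_eq_zero (x.strictMono i.castSucc_lt_succ)
      (hf.mono (Icc_subset_Icc (hsab _ (hx _)).1 (hsab _ (hx _)).2))
      ((hfs _ (hx _)).trans (hfs _ (hx _)).symm)
      fun y hy ↦ hff' y (Ioo_subset_Ioo (hsab _ (hx _)).1 (hsab _ (hx _)).2 hy)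
  choose y hy hy0 using rolle
  have y_strictMono : StrictMono y := fun i j hij ↦
    (hy i).2.trans_le (x.monotone (Fin.succ_le_castSucc_iff.2 hij)) |>.trans (hy j).1
  refine ⟨Finset.univ.image y, ?_, ?_⟩
  · rw [Finset.card_image_of_injective _ y_strictMono.injective, Finset.card_fin]
  · simp only [Finset.mem_image, Finset.mem_univ, true_and, forall_exists_index,
      forall_apply_eq_imp_iff]
    exact fun i ↦ ⟨Ioo_subset_Ioo (hsab _ (hx _)).1 (hsab _ (hx _)).2 (hy i), hy0 i⟩

namespace IsDn

variable {n : ℕ} {a b : ℝ} {fd gd : ℕ → ℝ → ℝ}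

theorem continuousOn_zero (h : IsDn n a b fd) : ContinuousOn (fd 0) (Icc a b) := by
  rcases Nat.lt_or_ge 1 n with hn | hn
  · exact fun x hx ↦ (h.1 0 hn x hx).continuousWithinAt
  · simpa only [Nat.sub_eq_zero_of_le hn] using h.2.1

theorem hasDerivAt_zero (h : IsDn (n + 1) a b fd) {x : ℝ} (hx : x ∈ Ioo a b) :
    HasDerivAt (fd 0) (fd 1 x) x := by
  rcases n.eq_zero_or_pos with rfl | hn
  · exact h.2.2 x hx
  · exact (h.1 0 (by lia) x (Ioo_subset_Icc_self hx)).hasDerivAt (Icc_mem_nhds hx.1 hx.2)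

theorem tail (h : IsDn (n + 2) a b fd) : IsDn (n + 1) a b fun k ↦ fd (k + 1) :=
  ⟨fun k hk ↦ h.1 (k + 1) (by lia), h.2.1, h.2.2⟩

theorem sub (hf : IsDn n a b fd) (hg : IsDn n a b gd) :
    IsDn n a b fun k x ↦ fd k x - gd k x :=
  ⟨fun k hk x hx ↦ (hf.1 k hk x hx).sub (hg.1 k hk x hx), hf.2.1.sub hg.2.1,
    fun x hx ↦ (hf.2.2 x hx).sub (hg.2.2 x hx)⟩

theorem exists_eq_zero (hn : 1 ≤ n) (h : IsDn n a b fd) {s : Finset ℝ} (hs : s.card = n + 1)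
    (hsab : ∀ x ∈ s, x ∈ Icc a b) (hfs : ∀ x ∈ s, fd 0 x = 0) :
    ∃ c ∈ Ioo a b, fd n c = 0 := by
  induction n, hn using Nat.le_induction generalizing fd s with
  | base =>
    obtain ⟨t, ht, ht0⟩ := exists_finset_hasDerivAt_eq_zero h.continuousOn_zero
      (fun _ ↦ h.hasDerivAt_zero) hs hsab hfs
    obtain ⟨c, hc⟩ := Finset.card_pos.1 (ht ▸ Nat.one_pos)
    exact ⟨c, ht0 c hc⟩
  | succ n hn ih =>
    obtain ⟨n, rfl⟩ := Nat.exists_eq_add_of_le' hn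
    obtain ⟨t, ht, ht0⟩ := exists_finset_hasDerivAt_eq_zero h.continuousOn_zero
      (fun _ ↦ h.hasDerivAt_zero) hs hsab hfs
    exact ih h.tail ht (fun y hy ↦ Ioo_subset_Icc_self (ht0 y hy).1) fun y hy ↦ (ht0 y hy).2

end IsDn

end Rolle

section Polynomial

theorem isDn_eval_iterate_derivative {n : ℕ} (hn : 1 ≤ n) (a b : ℝ) (P : ℝ[X]) :
    IsDn n a b fun k x ↦ (derivative^[k] P).eval x := by
  have hasDeriv (k : ℕ) (x : ℝ) : HasDerivAt (fun x ↦ (derivative^[k] P).eval x)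
      ((derivative^[k + 1] P).eval x) x := by
    simpa only [Function.iterate_succ_apply'] using (derivative^[k] P).hasDerivAt x
  refine ⟨fun k _ x _ ↦ (hasDeriv k x).hasDerivWithinAt, (Polynomial.continuous _).continuousOn,
    fun x _ ↦ ?_⟩
  simpa only [Nat.sub_add_cancel hn] using hasDeriv (n - 1) x

theorem eval_iterate_derivative_of_natDegree_le {R : Type*} [CommSemiring R] {P : R[X]} {n : ℕ}
    (hP : P.natDegree ≤ n) (x : R) : (derivative^[n] P).eval x = n ! * P.coeff n := by
  have natDegree_eq_zero : (derivative^[n] P).natDegree = 0 := by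
    have := natDegree_iterate_derivative P n
    lia
  rw [eq_C_of_natDegree_eq_zero natDegree_eq_zero, eval_C, coeff_iterate_derivative, zero_add,
    Nat.descFactorial_self, nsmul_eq_mul]

end Polynomial

section DividedDifference

variable {ι F : Type*} [DecidableEq ι] [Field F] {s : Finset ι} {v : ι → F}

/-- The divided difference of `f` at the nodes `v i`, `i ∈ s`, in Lagrange form: the coefficient
of degree `s.card - 1` of the polynomial interpolating `f` there. -/
noncomputable def dividedDifference (s : Finset ι) (v : ι → F) (f : F → F) : F :=
  ∑ i ∈ s, Lagrange.nodalWeight s v i * f (v i)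

theorem dividedDifference_eval (hv : InjOn v s) {P : F[X]} (hP : P.degree < s.card) :
    dividedDifference s v (fun x ↦ P.eval x) = P.coeff (s.card - 1) := by
  simp only [Lagrange.coeff_eq_sum hv hP, dividedDifference, Lagrange.nodalWeight,
    Finset.prod_inv_distrib, div_eq_inv_mul]

theorem dividedDifference_congr {f g : F → F} (hfg : ∀ i ∈ s, f (v i) = g (v i)) :
    dividedDifference s v f = dividedDifference s v g :=
  Finset.sum_congr rfl fun i hi ↦ by rw [hfg i hi]

theorem nodalWeight_affine {i : ι} (hi : i ∈ s) (r m : F) :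
    Lagrange.nodalWeight s (fun j ↦ r * v j + m) i =
      (r ^ (s.card - 1))⁻¹ * Lagrange.nodalWeight s v i := by
  simp only [Lagrange.nodalWeight, add_sub_add_right_eq_sub, ← mul_sub, mul_inv,
    Finset.prod_mul_distrib, Finset.prod_const, Finset.card_erase_of_mem hi, inv_pow]

theorem abs_dividedDifference_le {v : ι → ℝ} {f : ℝ → ℝ} {M : ℝ}
    (hf : ∀ i ∈ s, |f (v i)| ≤ M) :
    |dividedDifference s v f| ≤ (∑ i ∈ s, |Lagrange.nodalWeight s v i|) * M := by
  rw [Finset.sum_mul]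
  refine (Finset.abs_sum_le_sum_abs _ _).trans (Finset.sum_le_sum fun i hi ↦ ?_)
  rw [abs_mul]
  exact mul_le_mul_of_nonneg_left (hf i hi) (abs_nonneg _)

theorem IsDn.exists_eq_factorial_mul_dividedDifference {n : ℕ} (hn : 1 ≤ n) {a b : ℝ}
    {fd : ℕ → ℝ → ℝ} (h : IsDn n a b fd) {v : ι → ℝ} (hs : s.card = n + 1) (hv : InjOn v s)
    (hvab : ∀ i ∈ s, v i ∈ Icc a b) :
    ∃ c ∈ Ioo a b, fd n c = n ! * dividedDifference s v (fd 0) := by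
  let P := Lagrange.interpolate s v fun i ↦ fd 0 (v i)
  have degree_lt : P.degree < s.card := Lagrange.degree_interpolate_lt _ hv
  have eval_node : ∀ i ∈ s, P.eval (v i) = fd 0 (v i) := fun i hi ↦
    Lagrange.eval_interpolate_at_node _ hv hi
  obtain ⟨c, hc, hc0⟩ := (h.sub (isDn_eval_iterate_derivative hn a b P)).exists_eq_zero hn
    (s := s.image v) (by rw [Finset.card_image_of_injOn hv, hs])
    (Finset.forall_mem_image.2 hvab)
    (Finset.forall_mem_image.2 fun i hi ↦ sub_eq_zero.2 (eval_node i hi).symm)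
  have natDegree_le : P.natDegree ≤ n := natDegree_le_of_degree_le <| by
    simpa only [hs, Nat.add_sub_cancel] using Lagrange.degree_interpolate_le _ hv
  have coeff_eq : dividedDifference s v (fd 0) = P.coeff n := by
    rw [← dividedDifference_congr (f := fun x ↦ P.eval x) eval_node,
      dividedDifference_eval hv degree_lt, hs, Nat.add_sub_cancel]
  exact ⟨c, hc, by
    rw [coeff_eq, ← eval_iterate_derivative_of_natDegree_le natDegree_le c, sub_eq_zero.1 hc0]⟩

end DividedDifference

section Chebyshev

open Polynomial.Chebyshev

theorem coeff_chebyshev_T_natCast (n : ℕ) : (T ℝ n).coeff n = 2 ^ (n - 1) := by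
  simpa only [leadingCoeff, natDegree_T, Int.natAbs_natCast] using leadingCoeff_T ℝ n

theorem abs_nodalWeight_node {n i : ℕ} (hi : i ≤ n) :
    |Lagrange.nodalWeight (Finset.range (n + 1)) (node n) i| =
      Lagrange.nodalWeight (Finset.range (n + 1)) (node n) i * (-1) ^ i := by
  have alternating : 0 < Lagrange.nodalWeight (Finset.range (n + 1)) (node n) i * (-1) ^ i := by
    simpa only [Lagrange.nodalWeight, Finset.prod_inv_distrib, mul_inv_rev, ← inv_pow,
      inv_neg_one] using inv_pos.2 (zero_lt_prod_node_sub_node hi)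
  rw [← abs_of_pos alternating, abs_mul, abs_neg_one_pow, mul_one]

theorem sum_abs_nodalWeight_node (n : ℕ) :
    ∑ i ∈ Finset.range (n + 1), |Lagrange.nodalWeight (Finset.range (n + 1)) (node n) i| =
      2 ^ (n - 1) := by
  have degree_lt : (T ℝ n).degree < (Finset.range (n + 1)).card := by
    rw [degree_T, Int.natAbs_natCast, Finset.card_range]
    exact_mod_cast n.lt_succ_self
  calc
    _ = dividedDifference (Finset.range (n + 1)) (node n) (fun x ↦ (T ℝ n).eval x) :=
      Finset.sum_congr rfl fun i hi ↦ by
        have hi := Finset.mem_range_succ_iff.1 hi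
        simp only [abs_nodalWeight_node hi, eval_T_real_node (Finset.mem_Iic.2 hi)]
    _ = 2 ^ (n - 1) := by
      rw [dividedDifference_eval (strictAntiOn_node n).injOn degree_lt, Finset.card_range,
        Nat.add_sub_cancel, coeff_chebyshev_T_natCast]

variable {a b : ℝ}

/-- The extremal points of the Chebyshev polynomial of degree `n` on `[a, b]`, in decreasing
order, for `i ≤ n`. -/
noncomputable def nodeIcc (a b : ℝ) (n i : ℕ) : ℝ := (b - a) / 2 * node n i + (a + b) / 2

theorem nodeIcc_mem_Icc (hab : a ≤ b) (n i : ℕ) : nodeIcc a b n i ∈ Icc a b := by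
  obtain ⟨hl, hu⟩ := node_mem_Icc (n := n) (i := i)
  constructor <;> unfold nodeIcc <;> nlinarith

theorem injOn_nodeIcc (hab : a ≠ b) (n : ℕ) : InjOn (nodeIcc a b n) (Finset.range (n + 1)) := by
  have ratio_ne_zero : (b - a) / 2 ≠ 0 := div_ne_zero (sub_ne_zero.2 hab.symm) two_ne_zero
  exact fun i hi j hj hij ↦ (strictAntiOn_node n).injOn hi hj
    (mul_left_cancel₀ ratio_ne_zero (add_right_cancel hij))

theorem sum_abs_nodalWeight_nodeIcc (hab : a ≤ b) (n : ℕ) :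
    ∑ i ∈ Finset.range (n + 1), |Lagrange.nodalWeight (Finset.range (n + 1)) (nodeIcc a b n) i| =
      2 ^ (n - 1) * (2 / (b - a)) ^ n := by
  have scaled_weight : ∀ i ∈ Finset.range (n + 1),
      |Lagrange.nodalWeight (Finset.range (n + 1)) (nodeIcc a b n) i| =
        |Lagrange.nodalWeight (Finset.range (n + 1)) (node n) i| * (2 / (b - a)) ^ n := by
    intro i hi
    have ratio_nonneg : 0 ≤ 2 / (b - a) := div_nonneg zero_le_two (sub_nonneg.2 hab)
    rw [show nodeIcc a b n = fun j ↦ (b - a) / 2 * node n j + (a + b) / 2 from rfl,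
      nodalWeight_affine hi, Finset.card_range, Nat.add_sub_cancel, ← inv_pow, inv_div, abs_mul,
      abs_of_nonneg (pow_nonneg ratio_nonneg n), mul_comm]
  rw [Finset.sum_congr rfl scaled_weight, ← Finset.sum_mul, sum_abs_nodalWeight_node]

/-- The Chebyshev polynomial of degree `n` transported to `[a, b]`: `Tₙ` composed with the
increasing affine bijection of `[a, b]` onto `[-1, 1]`. -/
noncomputable def chebyshevIcc (a b : ℝ) (n : ℕ) : ℝ[X] :=
  (T ℝ n).comp (C (2 / (b - a)) * X + C (-(a + b) / (b - a)))

theorem natDegree_chebyshevIcc (hab : a ≠ b) (n : ℕ) : (chebyshevIcc a b n).natDegree = n := by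
  have ratio_ne_zero : 2 / (b - a) ≠ 0 := div_ne_zero two_ne_zero (sub_ne_zero.2 hab.symm)
  rw [chebyshevIcc, natDegree_comp, natDegree_linear ratio_ne_zero, natDegree_T,
    Int.natAbs_natCast, mul_one]

theorem coeff_chebyshevIcc (hab : a ≠ b) (n : ℕ) :
    (chebyshevIcc a b n).coeff n = 2 ^ (n - 1) * (2 / (b - a)) ^ n := by
  have ratio_ne_zero : 2 / (b - a) ≠ 0 := div_ne_zero two_ne_zero (sub_ne_zero.2 hab.symm)
  calc
    _ = (chebyshevIcc a b n).leadingCoeff := by rw [leadingCoeff, natDegree_chebyshevIcc hab]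
    _ = 2 ^ (n - 1) * (2 / (b - a)) ^ n := by
      rw [chebyshevIcc, leadingCoeff_comp (natDegree_linear ratio_ne_zero ▸ one_ne_zero),
        leadingCoeff_linear ratio_ne_zero, leadingCoeff_T, natDegree_T, Int.natAbs_natCast]

theorem eval_chebyshevIcc (n : ℕ) (x : ℝ) :
    (chebyshevIcc a b n).eval x = (T ℝ n).eval ((2 * x - (a + b)) / (b - a)) := by
  simp only [chebyshevIcc, eval_comp, eval_add, eval_mul, eval_C, eval_X]
  congr 1
  ring

theorem Lsup_chebyshevIcc (hab : a < b) (n : ℕ) :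
    Lsup a b (fun x ↦ (chebyshevIcc a b n).eval x) = 1 := by
  have length_pos : 0 < b - a := sub_pos.2 hab
  simp only [Lsup, eval_chebyshevIcc]
  refine IsGreatest.csSup_eq ⟨⟨b, right_mem_Icc.2 hab.le, ?_⟩, ?_⟩
  · have endpoint : (2 * b - (a + b)) / (b - a) = 1 := by
      rw [div_eq_one_iff_eq length_pos.ne']
      ring
    simp only [endpoint, T_eval_one, abs_one]
  · rintro _ ⟨x, hx, rfl⟩
    refine abs_eval_T_real_le_one n (abs_le.2 ⟨?_, ?_⟩)
    · rw [le_div_iff₀ length_pos]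
      linarith [hx.1]
    · rw [div_le_one length_pos]
      linarith [hx.2]

end Chebyshev

section Extremal

variable {n : ℕ} {a b : ℝ}

theorem mIoo_le_abs (n : ℕ) (fd : ℕ → ℝ → ℝ) {x : ℝ} (hx : x ∈ Ioo a b) :
    mIoo n a b fd ≤ |fd n x| :=
  csInf_le ⟨0, forall_mem_image.2 fun _ _ ↦ abs_nonneg _⟩ (mem_image_of_mem _ hx)

theorem abs_le_Lsup {f : ℝ → ℝ} (hf : ContinuousOn f (Icc a b)) {x : ℝ} (hx : x ∈ Icc a b) :
    |f x| ≤ Lsup a b f :=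
  le_csSup (isCompact_Icc.bddAbove_image hf.abs) (mem_image_of_mem _ hx)

theorem factorial_mul_two_pow_mul_div_pow (n : ℕ) (l : ℝ) :
    n ! * (2 ^ (n - 1) * (2 / l) ^ n) = 2 ^ (2 * n - 1) * n ! / l ^ n := by
  rw [show 2 * n - 1 = n - 1 + n by lia, pow_add, div_pow]
  ring

theorem IsDn.mIoo_le (hab : a < b) (hn : 1 ≤ n) {fd : ℕ → ℝ → ℝ} (h : IsDn n a b fd) :
    mIoo n a b fd ≤ 2 ^ (2 * n - 1) * n ! / (b - a) ^ n * Lsup a b (fd 0) := by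
  obtain ⟨c, hc, hfc⟩ := h.exists_eq_factorial_mul_dividedDifference hn
    (Finset.card_range (n + 1)) (injOn_nodeIcc hab.ne n) fun i _ ↦ nodeIcc_mem_Icc hab.le n i
  have dividedDifference_le := abs_dividedDifference_le (s := Finset.range (n + 1))
    fun i _ ↦ abs_le_Lsup h.continuousOn_zero (nodeIcc_mem_Icc hab.le n i)
  calc
    mIoo n a b fd ≤ |fd n c| := mIoo_le_abs n fd hc
    _ = n ! * |dividedDifference (Finset.range (n + 1)) (nodeIcc a b n) (fd 0)| := by
      rw [hfc, abs_mul, Nat.abs_cast]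
    _ ≤ n ! * (2 ^ (n - 1) * (2 / (b - a)) ^ n * Lsup a b (fd 0)) := by
      rw [← sum_abs_nodalWeight_nodeIcc hab.le]
      gcongr
    _ = 2 ^ (2 * n - 1) * n ! / (b - a) ^ n * Lsup a b (fd 0) := by
      rw [← mul_assoc, factorial_mul_two_pow_mul_div_pow]

theorem mIoo_chebyshevIcc (hab : a < b) (n : ℕ) :
    mIoo n a b (fun k x ↦ (derivative^[k] (chebyshevIcc a b n)).eval x) =
      2 ^ (2 * n - 1) * n ! / (b - a) ^ n := by
  have derivative_const (x : ℝ) : (derivative^[n] (chebyshevIcc a b n)).eval x =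
      2 ^ (2 * n - 1) * n ! / (b - a) ^ n := by
    rw [eval_iterate_derivative_of_natDegree_le (natDegree_chebyshevIcc hab.ne n).le,
      coeff_chebyshevIcc hab.ne, factorial_mul_two_pow_mul_div_pow]
  simp only [mIoo, derivative_const, (nonempty_Ioo.2 hab).image_const, csInf_singleton]
  exact abs_of_pos (div_pos (by positivity) (pow_pos (sub_pos.2 hab) n))

theorem stmt9_general (hab : a < b) (hn : 1 ≤ n) :
    (∀ fd : ℕ → ℝ → ℝ, IsDn n a b fd →
      mIoo n a b fd ≤ 2 ^ (2 * n - 1) * n ! / (b - a) ^ n * Lsup a b (fd 0)) ∧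
    (∀ C : ℝ, (∀ fd : ℕ → ℝ → ℝ, IsDn n a b fd → mIoo n a b fd ≤ C * Lsup a b (fd 0)) →
      2 ^ (2 * n - 1) * n ! / (b - a) ^ n ≤ C) := by
  refine ⟨fun fd h ↦ h.mIoo_le hab hn, fun C hC ↦ ?_⟩
  have chebyshev_le := hC _ (isDn_eval_iterate_derivative hn a b (chebyshevIcc a b n))
  rwa [mIoo_chebyshevIcc hab, Function.iterate_zero_apply, Lsup_chebyshevIcc hab,
    mul_one] at chebyshev_le

end Extremal

/-- `C(n,∞) = 2^{2n-1} n!`: every `f ∈ 𝒟ⁿ([0,1])` satisfies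
`m_n(f) ≤ 2^{2n-1} n! · sup_{[0,1]} |f|`, and this constant is smallest. -/
theorem stmt9 (n : ℕ) (hn : 1 ≤ n) :
    (∀ fd : ℕ → ℝ → ℝ, IsDn n 0 1 fd →
      mIoo n 0 1 fd ≤ 2 ^ (2 * n - 1) * (n ! : ℝ) * Lsup 0 1 (fd 0)) ∧
    (∀ C : ℝ, (∀ fd : ℕ → ℝ → ℝ, IsDn n 0 1 fd →
        mIoo n 0 1 fd ≤ C * Lsup 0 1 (fd 0)) →
      (2 ^ (2 * n - 1) * (n ! : ℝ)) ≤ C) := by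
  simpa only [sub_zero, one_pow, div_one] using stmt9_general (zero_lt_one' ℝ) hn
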